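/- Assume that for every state y ∉ N_P the limit H_y = lim_{ε→0⁺} h_{yS}(ε) exists. Then for every g ∈ N_P the limit lim_{ε→0⁺} h_{gS}(ε) exists and equals Σ_{y ∉ N_P} W(N_P, y) · H_y. In particular, all states of a pseudosink have the same limiting hitting probabilities. -/

import Mathlib

/-!
The proof combines compactness with the maximum principle.

For small `ε > 0` the matrix `P(ε)` is stochastic, so the path sum defining the hitting
probability converges, lies in `[0, 1]` (`hitENN_le_one`) and satisfies the first-step equation
`h x = Σ_j P(ε) x j * h j` at every `x ∉ A` (`hitProb_step`). Since the hitting probabilities are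
bounded, along any ultrafilter finer than `𝓝[>] 0` they converge to some `L`, and it suffices to
identify `L` on the pseudosink `N`.

* Letting `ε → 0` in the first-step equation shows that `L` is harmonic on `N` for the irreducible
  regular chain, which never leaves `N`. By the maximum principle, `L` is a constant `ℓ` on `N`
  (`harmonic_const`).
* Averaging the first-step equation against the stationary distribution `π` cancels the terms of
  order zero. What remains is exactly `ε` times a balance equation, whose limit, after division by
  `ε`, is `Σ_{x ∈ N} π x * Σ_{y ∉ N} c x y * (H y - ℓ) = 0`.

The total exit weight `Σ_{x ∈ N, y ∉ N} c x y * π x` is positive, because `π > 0` on `N`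
(`stationary_pos`) and some ε-edge leaves `N`. Solving the balance equation for `ℓ` gives
`ℓ = Σ_y W(N, y) * H y`, independently of the ultrafilter.
-/

open Filter Topology
open scoped Classical

noncomputable section

/-- Product of transition weights along a path (given as the list of visited states). -/
def pathWeight {W : Type*} (M : W → W → ℝ) (l : List W) : ℝ :=
  ((l.zip l.tail).map fun p => M p.1 p.2).prod

/-- Row sums `t i = Σ_j c i j` of the ε-coefficients. -/
def rowT {V : Type*} [Fintype V] (c : V → V → ℝ) (i : V) : ℝ := ∑ j, c i j

/-- The transition matrix `P(ε) i j = (1 − ε·t i)·r i j + ε·c i j` of the ε-Markov chain. -/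
def Pmat {V : Type*} [Fintype V] (r c : V → V → ℝ) (ε : ℝ) (i j : V) : ℝ :=
  (1 - ε * rowT c i) * r i j + ε * c i j

/-- A path from `i` hitting `S`: `i = v₀, …, v_k` with `v_k ∈ S` and `v₀, …, v_{k−1} ∉ A`. -/
def IsHitPath {W : Type*} (A S : Set W) (i : W) (l : List W) : Prop :=
  l.head? = some i ∧ (∃ x ∈ S, l.getLast? = some x) ∧ ∀ p ∈ l.dropLast, p ∉ A

/-- The hitting probability of `S` from `i`: the sum over all finite paths
`i = v₀, …, v_k` with `v_k ∈ S` and `v₀, …, v_{k−1} ∉ A` of `Π_{m<k} M v_m v_{m+1}`. -/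
def hitProb {W : Type*} (M : W → W → ℝ) (A S : Set W) (i : W) : ℝ :=
  ∑' l : {l : List W // IsHitPath A S i l}, pathWeight M l.1

/-- A regular edge of the ε-Markov chain: positive regular coefficient. -/
def RegEdge {V : Type*} (r : V → V → ℝ) (a b : V) : Prop := 0 < r a b

/-- An ε-edge of the ε-Markov chain: zero regular coefficient, positive ε-coefficient. -/
def EpsEdge {V : Type*} (r c : V → V → ℝ) (a b : V) : Prop := r a b = 0 ∧ 0 < c a b

/-- An rSCC: an equivalence class of mutual reachability via regular edges. -/
def IsRSCC {V : Type*} (r : V → V → ℝ) (N : Set V) : Prop :=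
  ∃ i, N = {j | Relation.ReflTransGen (RegEdge r) i j ∧ Relation.ReflTransGen (RegEdge r) j i}

/-- A pseudosink: an rSCC disjoint from `A`, with no regular edge leaving it,
but with at least one outgoing ε-edge. -/
def IsPseudosink {V : Type*} (r c : V → V → ℝ) (A N : Set V) : Prop :=
  IsRSCC r N ∧ (∀ x ∈ N, x ∉ A) ∧ (∀ x ∈ N, ∀ y, RegEdge r x y → y ∈ N) ∧
  ∃ x ∈ N, ∃ y, y ∉ N ∧ EpsEdge r c x y

/-- `W(N_P, y) = (Σ_{x : (x,y) ∈ O} c x y · π x) / (Σ_{(x',y') ∈ O} c x' y' · π x')`,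
where `O` is the set of outgoing ε-edges of the pseudosink `N_P`. -/
def Wcoll {V : Type*} [Fintype V] (c : V → V → ℝ) (NP : Set V) (π : V → ℝ) (y : V) : ℝ :=
  (∑ x ∈ Finset.univ.filter (fun x => x ∈ NP ∧ y ∉ NP ∧ 0 < c x y), c x y * π x) /
  (∑ p ∈ Finset.univ.filter (fun p : V × V => p.1 ∈ NP ∧ p.2 ∉ NP ∧ 0 < c p.1 p.2),
    c p.1 p.2 * π p.1)

/-! ### Hitting probabilities of a stochastic matrix -/

open scoped ENNReal in
/-- The hitting probability as an extended nonnegative sum, which needs no summability. -/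
def hitENN {W : Type*} (M : W → W → ℝ) (A S : Set W) (i : W) : ℝ≥0∞ :=
  ∑' l : {l : List W // IsHitPath A S i l}, ENNReal.ofReal (pathWeight M l.1)

open scoped ENNReal in
/-- The probability of hitting `S` from `i` along a path visiting at most `n` states
(counted with multiplicity, endpoints included). -/
def hitENNTrunc {W : Type*} (M : W → W → ℝ) (A S : Set W) (n : ℕ) (i : W) : ℝ≥0∞ :=
  ∑' l : {l : List W // IsHitPath A S i l},
    if l.1.length ≤ n then ENNReal.ofReal (pathWeight M l.1) else 0

lemma pathWeight_nonneg {W : Type*} {M : W → W → ℝ} (hM : ∀ i j, 0 ≤ M i j) (l : List W) :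
    0 ≤ pathWeight M l := by
  refine List.prod_nonneg fun a ha => ?_
  obtain ⟨p, -, rfl⟩ := List.mem_map.1 ha
  exact hM _ _

lemma pathWeight_cons_cons {W : Type*} (M : W → W → ℝ) (i j : W) (l : List W) :
    pathWeight M (i :: j :: l) = M i j * pathWeight M (j :: l) := by
  simp [pathWeight]

lemma IsHitPath.eq_cons {W : Type*} {A S : Set W} {i : W} {l : List W} (h : IsHitPath A S i l) :
    ∃ t, l = i :: t := by
  cases l with
  | nil => simp [IsHitPath] at h
  | cons a t => exact ⟨t, by simpa using h.1⟩

lemma isHitPath_cons_cons {W : Type*} {A S : Set W} {i j : W} (hi : i ∉ A) (l : List W) :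
    IsHitPath A S i (i :: j :: l) ↔ IsHitPath A S j (j :: l) := by
  simp [IsHitPath, hi]

/-- A hitting path from a non-absorbing state is a first step to some `j` followed by a hitting
path from `j`. -/
def firstStep {W : Type*} {A S : Set W} (hS : S ⊆ A) {i : W} (hi : i ∉ A) :
    (Σ j, {l : List W // IsHitPath A S j l}) ≃ {l : List W // IsHitPath A S i l} :=
  Equiv.ofBijective
    (fun p => ⟨i :: p.2.1, by
      obtain ⟨j, l, hl⟩ := p
      obtain ⟨t, rfl⟩ := hl.eq_cons
      exact (isHitPath_cons_cons hi t).2 hl⟩) <| by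
    constructor
    · rintro ⟨j, l, hl⟩ ⟨j', l', hl'⟩ h
      obtain ⟨t, rfl⟩ := hl.eq_cons
      obtain ⟨t', rfl⟩ := hl'.eq_cons
      have h' : j = j' ∧ t = t' := by simpa using h
      obtain ⟨rfl, rfl⟩ := h'
      rfl
    · rintro ⟨l, hl⟩
      obtain ⟨t, rfl⟩ := hl.eq_cons
      cases t with
      | nil =>
        obtain ⟨x, hx, hx'⟩ := hl.2.1
        have : i = x := by simpa using hx'
        exact absurd (hS (this ▸ hx)) hi
      | cons j t => exact ⟨⟨j, j :: t, (isHitPath_cons_cons hi t).1 hl⟩, rfl⟩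

lemma ofReal_pathWeight_firstStep {W : Type*} {M : W → W → ℝ} (hM : ∀ i j, 0 ≤ M i j)
    {A S : Set W} (hS : S ⊆ A) {i : W} (hi : i ∉ A) (j : W)
    (l : {l : List W // IsHitPath A S j l}) :
    ENNReal.ofReal (pathWeight M (firstStep hS hi ⟨j, l⟩).1) =
      ENNReal.ofReal (M i j) * ENNReal.ofReal (pathWeight M l.1) := by
  obtain ⟨l, hl⟩ := l
  obtain ⟨t, rfl⟩ := hl.eq_cons
  rw [← ENNReal.ofReal_mul (hM i j), ← pathWeight_cons_cons]
  rfl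

lemma hitENN_step {W : Type*} [Fintype W] {M : W → W → ℝ} (hM : ∀ i j, 0 ≤ M i j)
    {A S : Set W} (hS : S ⊆ A) {i : W} (hi : i ∉ A) :
    hitENN M A S i = ∑ j, ENNReal.ofReal (M i j) * hitENN M A S j := by
  rw [hitENN, ← (firstStep hS hi).tsum_eq, ENNReal.tsum_sigma', tsum_fintype]
  refine Finset.sum_congr rfl fun j _ => ?_
  rw [hitENN, ← ENNReal.tsum_mul_left]
  exact tsum_congr fun l => ofReal_pathWeight_firstStep hM hS hi j l

lemma hitENNTrunc_succ {W : Type*} [Fintype W] {M : W → W → ℝ} (hM : ∀ i j, 0 ≤ M i j)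
    {A S : Set W} (hS : S ⊆ A) (n : ℕ) {i : W} (hi : i ∉ A) :
    hitENNTrunc M A S (n + 1) i = ∑ j, ENNReal.ofReal (M i j) * hitENNTrunc M A S n j := by
  rw [hitENNTrunc, ← (firstStep hS hi).tsum_eq, ENNReal.tsum_sigma', tsum_fintype]
  refine Finset.sum_congr rfl fun j _ => ?_
  rw [hitENNTrunc, ← ENNReal.tsum_mul_left]
  refine tsum_congr fun l => ?_
  have hlen : (firstStep hS hi ⟨j, l⟩).1.length = l.1.length + 1 := rfl
  rw [ofReal_pathWeight_firstStep hM hS hi j l, hlen]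
  simp only [Nat.add_le_add_iff_right, mul_ite, mul_zero]

/-- From an absorbing state the only possible hitting path is the trivial one, of weight `1`. -/
lemma hitENNTrunc_le_one_of_mem {W : Type*} (M : W → W → ℝ) {A S : Set W} (n : ℕ) {i : W}
    (hi : i ∈ A) : hitENNTrunc M A S n i ≤ 1 := by
  have key : ∀ l, IsHitPath A S i l → l = [i] := by
    intro l hl
    obtain ⟨t, rfl⟩ := hl.eq_cons
    cases t with
    | nil => rfl
    | cons j t => exact absurd hi (hl.2.2 i (by simp))
  have : Subsingleton {l : List W // IsHitPath A S i l} :=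
    ⟨fun a b => Subtype.ext ((key _ a.2).trans (key _ b.2).symm)⟩
  rcases isEmpty_or_nonempty {l : List W // IsHitPath A S i l} with h | ⟨⟨a⟩⟩
  · simp [hitENNTrunc]
  · rw [hitENNTrunc, tsum_eq_single a fun b hb => absurd (Subsingleton.elim b a) hb, key _ a.2]
    split_ifs <;> simp [pathWeight]

lemma hitENNTrunc_le_one {W : Type*} [Fintype W] {M : W → W → ℝ} (hM : ∀ i j, 0 ≤ M i j)
    (hM1 : ∀ i, ∑ j, M i j = 1) {A S : Set W} (hS : S ⊆ A) (n : ℕ) (i : W) :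
    hitENNTrunc M A S n i ≤ 1 := by
  induction n generalizing i with
  | zero =>
    have : hitENNTrunc M A S 0 i = 0 := by
      refine ENNReal.tsum_eq_zero.2 fun l => ?_
      obtain ⟨t, ht⟩ := l.2.eq_cons
      simp [ht]
    simp [this]
  | succ n ih =>
    by_cases hi : i ∈ A
    · exact hitENNTrunc_le_one_of_mem M _ hi
    · rw [hitENNTrunc_succ hM hS n hi]
      calc ∑ j, ENNReal.ofReal (M i j) * hitENNTrunc M A S n j
          ≤ ∑ j, ENNReal.ofReal (M i j) :=
            Finset.sum_le_sum fun j _ => mul_le_of_le_one_right' (ih j)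
        _ = 1 := by
            rw [← ENNReal.ofReal_sum_of_nonneg fun j _ => hM i j, hM1, ENNReal.ofReal_one]

/-- Any finite family of hitting paths has bounded length, so its total weight is at most `1` by
`hitENNTrunc_le_one`. -/
lemma hitENN_le_one {W : Type*} [Fintype W] {M : W → W → ℝ} (hM : ∀ i j, 0 ≤ M i j)
    (hM1 : ∀ i, ∑ j, M i j = 1) {A S : Set W} (hS : S ⊆ A) (i : W) :
    hitENN M A S i ≤ 1 := by
  rw [hitENN, ENNReal.tsum_eq_iSup_sum]
  refine iSup_le fun F => ?_
  refine le_trans ?_ (hitENNTrunc_le_one hM hM1 hS (F.sup fun l => l.1.length) i)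
  refine le_trans (le_of_eq ?_) (ENNReal.sum_le_tsum F)
  refine Finset.sum_congr rfl fun l hl => ?_
  rw [if_pos (Finset.le_sup (f := fun l : {l : List W // IsHitPath A S i l} => l.1.length) hl)]

lemma hitProb_eq_toReal {W : Type*} {M : W → W → ℝ} (hM : ∀ i j, 0 ≤ M i j) (A S : Set W)
    (i : W) : hitProb M A S i = (hitENN M A S i).toReal := by
  rw [hitENN, ENNReal.tsum_toReal_eq fun _ => ENNReal.ofReal_ne_top]
  exact tsum_congr fun l => (ENNReal.toReal_ofReal (pathWeight_nonneg hM _)).symm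

lemma hitProb_mem_Icc {W : Type*} [Fintype W] {M : W → W → ℝ} (hM : ∀ i j, 0 ≤ M i j)
    (hM1 : ∀ i, ∑ j, M i j = 1) {A S : Set W} (hS : S ⊆ A) (i : W) :
    hitProb M A S i ∈ Set.Icc (0 : ℝ) 1 := by
  rw [hitProb_eq_toReal hM]
  exact ⟨ENNReal.toReal_nonneg,
    ENNReal.toReal_le_of_le_ofReal zero_le_one (by simpa using hitENN_le_one hM hM1 hS i)⟩

lemma hitProb_step {W : Type*} [Fintype W] {M : W → W → ℝ} (hM : ∀ i j, 0 ≤ M i j)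
    (hM1 : ∀ i, ∑ j, M i j = 1) {A S : Set W} (hS : S ⊆ A) {i : W} (hi : i ∉ A) :
    hitProb M A S i = ∑ j, M i j * hitProb M A S j := by
  simp only [hitProb_eq_toReal hM]
  rw [hitENN_step hM hS hi, ENNReal.toReal_sum]
  · exact Finset.sum_congr rfl fun j _ => by
      rw [ENNReal.toReal_mul, ENNReal.toReal_ofReal (hM i j)]
  · exact fun j _ => ENNReal.mul_ne_top ENNReal.ofReal_ne_top
      ((hitENN_le_one hM hM1 hS j).trans_lt ENNReal.one_lt_top).ne

/-! ### Small perturbations and the regular chain on the pseudosink -/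

/-- For all sufficiently small `ε > 0`, the matrix `P(ε)` is stochastic. -/
lemma eventually_stochastic {V : Type*} [Fintype V] {r c : V → V → ℝ}
    (hr0 : ∀ i j, 0 ≤ r i j) (hr1 : ∀ i, ∑ j, r i j = 1) (hc0 : ∀ i j, 0 ≤ c i j) :
    ∀ᶠ ε in 𝓝[>] (0 : ℝ), 0 < ε ∧ (∀ i j, 0 ≤ Pmat r c ε i j) ∧ ∀ i, ∑ j, Pmat r c ε i j = 1 := by
  have hsmall : ∀ᶠ ε in 𝓝[>] (0 : ℝ), ∀ i, ε * rowT c i < 1 := by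
    refine eventually_all.2 fun i => nhdsWithin_le_nhds ?_
    have : Tendsto (fun ε : ℝ => ε * rowT c i) (𝓝 0) (𝓝 (0 * rowT c i)) :=
      (continuous_id.mul continuous_const).tendsto 0
    rw [zero_mul] at this
    exact this.eventually_lt_const one_pos
  filter_upwards [hsmall, self_mem_nhdsWithin] with ε hε hpos
  have hpos : 0 < ε := hpos
  refine ⟨hpos, fun i j => ?_, fun i => ?_⟩
  · exact add_nonneg (mul_nonneg (sub_nonneg.2 (hε i).le) (hr0 i j))
      (mul_nonneg hpos.le (hc0 i j))
  · simp only [Pmat, Finset.sum_add_distrib, ← Finset.mul_sum, hr1]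
    simp [rowT]

/-- Maximum principle: a harmonic function on a closed irreducible class is constant. -/
lemma harmonic_const {V : Type*} [Fintype V] {r : V → V → ℝ} {N : Set V}
    (hr0 : ∀ i j, 0 ≤ r i j) (hr1 : ∀ i, ∑ j, r i j = 1)
    (hcl : ∀ x ∈ N, ∀ y ∉ N, r x y = 0)
    (hirr : ∀ x ∈ N, ∀ y ∈ N,
      Relation.ReflTransGen (fun a b => a ∈ N ∧ b ∈ N ∧ 0 < r a b) x y)
    {L : V → ℝ} (hL : ∀ x ∈ N, L x = ∑ j, r x j * L j) {g x : V} (hg : g ∈ N) (hx : x ∈ N) :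
    L x = L g := by
  obtain ⟨m, hm, hmax⟩ := Finset.exists_max_image (Finset.univ.filter (· ∈ N)) L ⟨g, by simpa⟩
  simp only [Finset.mem_filter, Finset.mem_univ, true_and] at hm hmax
  have key : ∀ y, Relation.ReflTransGen (fun a b => a ∈ N ∧ b ∈ N ∧ 0 < r a b) m y →
      L y = L m := by
    intro y hy
    induction hy with
    | refl => rfl
    | @tail a b _ hab ih =>
      obtain ⟨ha, hb, hr⟩ := hab
      have hsum : ∑ j, r a j * (L m - L j) = 0 := by
        simp only [mul_sub, Finset.sum_sub_distrib, ← Finset.sum_mul, hr1, ← hL a ha]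
        linarith
      have hnn : ∀ j ∈ Finset.univ, 0 ≤ r a j * (L m - L j) := by
        intro j _
        by_cases hj : j ∈ N
        · exact mul_nonneg (hr0 a j) (sub_nonneg.2 (hmax j hj))
        · simp [hcl a ha j hj]
      have h0 := (Finset.sum_eq_zero_iff_of_nonneg hnn).1 hsum b (Finset.mem_univ b)
      rcases mul_eq_zero.1 h0 with h | h
      · exact absurd h hr.ne'
      · linarith
  rw [key x (hirr m hm x hx), key g (hirr m hm g hg)]

lemma stationary_pos {V : Type*} [Fintype V] {r : V → V → ℝ} {N : Set V}
    (hr0 : ∀ i j, 0 ≤ r i j)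
    (hirr : ∀ x ∈ N, ∀ y ∈ N,
      Relation.ReflTransGen (fun a b => a ∈ N ∧ b ∈ N ∧ 0 < r a b) x y)
    {π : V → ℝ} (hπ0 : ∀ x, 0 ≤ π x)
    (hπ1 : ∑ x ∈ Finset.univ.filter (· ∈ N), π x = 1)
    (hπs : ∀ y ∈ N, ∑ x ∈ Finset.univ.filter (· ∈ N), π x * r x y = π y)
    {y : V} (hy : y ∈ N) : 0 < π y := by
  obtain ⟨m, hm, hpos⟩ : ∃ m ∈ Finset.univ.filter (· ∈ N), 0 < π m :=
    Finset.exists_lt_of_sum_lt (by simp [hπ1])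
  have hm : m ∈ N := by simpa using hm
  induction hirr m hm y hy with
  | refl => exact hpos
  | @tail a b _ hab ih =>
    obtain ⟨ha, hb, hr⟩ := hab
    rw [← hπs b hb]
    exact (mul_pos (ih ha) hr).trans_le
      (Finset.single_le_sum (f := fun x => π x * r x b)
        (fun x _ => mul_nonneg (hπ0 x) (hr0 x b)) (by simpa using ha))

/-! ### Balance of the outgoing flow -/

/-- The balance equation: averaging the first-step equation over the stationary distribution
leaves only the terms of order `ε`, which therefore cancel. -/
lemma balance {V : Type*} [Fintype V] {r c : V → V → ℝ} {N : Set V}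
    (hcl : ∀ x ∈ N, ∀ y ∉ N, r x y = 0) {π : V → ℝ}
    (hπs : ∀ y ∈ N, ∑ x ∈ Finset.univ.filter (· ∈ N), π x * r x y = π y)
    {ε : ℝ} (hε : 0 < ε) {h : V → ℝ} (hh : ∀ x ∈ N, h x = ∑ j, Pmat r c ε x j * h j) :
    ∑ x ∈ Finset.univ.filter (· ∈ N), π x * ∑ j, c x j * (h j - ∑ k, r x k * h k) = 0 := by
  have h1 : ∀ x ∈ N, h x = (∑ k, r x k * h k) +
      ε * ∑ j, c x j * (h j - ∑ k, r x k * h k) := by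
    intro x hx
    conv_lhs => rw [hh x hx]
    simp only [Pmat, add_mul, Finset.sum_add_distrib, mul_assoc, ← Finset.mul_sum, mul_sub,
      Finset.sum_sub_distrib, ← Finset.sum_mul, rowT]
    ring
  have h2 : ∑ x ∈ Finset.univ.filter (· ∈ N), π x * ∑ k, r x k * h k =
      ∑ x ∈ Finset.univ.filter (· ∈ N), π x * h x := by
    simp only [Finset.mul_sum]
    rw [Finset.sum_comm, Finset.sum_filter]
    refine Finset.sum_congr rfl fun k _ => ?_
    split_ifs with hk
    · rw [← hπs k hk, Finset.sum_mul]
      exact Finset.sum_congr rfl fun x _ => by ring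
    · refine Finset.sum_eq_zero fun x hx => ?_
      rw [hcl x (by simpa using hx) k hk]
      ring
  have h3 : ∑ x ∈ Finset.univ.filter (· ∈ N), π x * h x =
      ∑ x ∈ Finset.univ.filter (· ∈ N), π x * (∑ k, r x k * h k) +
      ε * ∑ x ∈ Finset.univ.filter (· ∈ N), π x * ∑ j, c x j * (h j - ∑ k, r x k * h k) := by
    rw [Finset.mul_sum, ← Finset.sum_add_distrib]
    refine Finset.sum_congr rfl fun x hx => ?_
    conv_lhs => rw [h1 x (by simpa using hx)]
    ring
  have h4 : ε * ∑ x ∈ Finset.univ.filter (· ∈ N),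
      π x * ∑ j, c x j * (h j - ∑ k, r x k * h k) = 0 := by linarith
  exact (mul_eq_zero.1 h4).resolve_left hε.ne'

/-- On nonnegative coefficients, restricting to positive ones does not change the sums defining
`Wcoll`. -/
lemma Wcoll_eq {V : Type*} [Fintype V] {c : V → V → ℝ} (hc0 : ∀ i j, 0 ≤ c i j) (N : Set V)
    (π : V → ℝ) {y : V} (hy : y ∉ N) :
    Wcoll c N π y = (∑ x ∈ Finset.univ.filter (· ∈ N), c x y * π x) /
      ∑ z ∈ Finset.univ.filter (· ∉ N), ∑ x ∈ Finset.univ.filter (· ∈ N), c x z * π x := by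
  have hc : ∀ x y, ¬ 0 < c x y → c x y = 0 := fun x y h => le_antisymm (not_lt.1 h) (hc0 x y)
  rw [Wcoll]
  congr 1
  · rw [Finset.sum_filter, Finset.sum_filter]
    refine Finset.sum_congr rfl fun x _ => ?_
    by_cases hx : x ∈ N <;> by_cases hxy : 0 < c x y <;> simp [hx, hy, hxy, hc x y]
  · simp only [Finset.sum_filter]
    rw [Fintype.sum_prod_type, Finset.sum_comm]
    refine Finset.sum_congr rfl fun z _ => ?_
    by_cases hz : z ∈ N
    · simp [hz]
    · simp only [hz, not_false_eq_true, if_true, true_and]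
      refine Finset.sum_congr rfl fun x _ => ?_
      by_cases hx : x ∈ N <;> by_cases hxz : 0 < c x z <;> simp [hx, hxz, hc x z]

/-- if the limiting hitting probabilities `H_y = lim_{ε→0⁺} h_{yS}(ε)` exist
for all states `y ∉ N_P`, then for every `g ∈ N_P` the limit `lim_{ε→0⁺} h_{gS}(ε)` exists
and equals `Σ_{y ∉ N_P} W(N_P, y) · H_y`; in particular all states of the pseudosink have
the same limiting hitting probabilities. -/
theorem pseudosink_limit_hitProb
    {V : Type*} [Fintype V] (r c : V → V → ℝ) (A : Set V)
    (hr0 : ∀ i j, 0 ≤ r i j) (hr1 : ∀ i, ∑ j, r i j = 1)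
    (hc0 : ∀ i j, 0 ≤ c i j)
    (hAr : ∀ i ∈ A, r i i = 1) (hAc : ∀ i ∈ A, ∀ j, c i j = 0)
    (NP : Set V) (hNP : IsPseudosink r c A NP)
    (hQ : ∀ i ∈ NP, ∑ j ∈ Finset.univ.filter (· ∈ NP), r i j = 1)
    (hirr : ∀ x ∈ NP, ∀ y ∈ NP,
      Relation.ReflTransGen (fun a b => a ∈ NP ∧ b ∈ NP ∧ 0 < r a b) x y)
    (π : V → ℝ) (hπ0 : ∀ x, 0 ≤ π x)
    (hπ1 : ∑ x ∈ Finset.univ.filter (· ∈ NP), π x = 1)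
    (hπs : ∀ y ∈ NP, ∑ x ∈ Finset.univ.filter (· ∈ NP), π x * r x y = π y)
    (S : Set V) (hS : S ⊆ A) (H : V → ℝ)
    (hH : ∀ y, y ∉ NP →
      Filter.Tendsto (fun ε => hitProb (Pmat r c ε) A S y) (𝓝[>] (0:ℝ)) (𝓝 (H y))) :
    ∀ g ∈ NP,
      Filter.Tendsto (fun ε => hitProb (Pmat r c ε) A S g) (𝓝[>] (0:ℝ))
        (𝓝 (∑ y ∈ Finset.univ.filter (· ∉ NP), Wcoll c NP π y * H y)) := by
  intro g hg
  obtain ⟨-, hNA, hclosed, x₀, hx₀, y₀, hy₀, -, hc₀⟩ := hNP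
  have hcl : ∀ x ∈ NP, ∀ y ∉ NP, r x y = 0 := fun x hx y hy =>
    le_antisymm (not_lt.1 fun h => hy (hclosed x hx y h)) (hr0 x y)
  have hst := eventually_stochastic hr0 hr1 hc0
  rw [tendsto_iff_ultrafilter]
  intro U hU
  have hlim : ∀ x, ∃ a : ℝ, Tendsto (fun ε => hitProb (Pmat r c ε) A S x) U (𝓝 a) := by
    intro x
    obtain ⟨a, -, ha⟩ := isCompact_Icc.ultrafilter_le_nhds'
      (U.map fun ε => hitProb (Pmat r c ε) A S x)
      (hU (hst.mono fun ε h => hitProb_mem_Icc h.2.1 h.2.2 hS x))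
    exact ⟨a, ha⟩
  choose L hL using hlim
  have hLH : ∀ y, y ∉ NP → L y = H y := fun y hy =>
    tendsto_nhds_unique (hL y) ((hH y hy).mono_left hU)
  have hid : Tendsto (fun ε : ℝ => ε) U (𝓝 0) := hU.trans nhdsWithin_le_nhds
  have hP : ∀ x j, Tendsto (fun ε => Pmat r c ε x j) U (𝓝 (r x j)) := fun x j => by
    simpa [Pmat] using
      (((tendsto_const_nhds (x := (1 : ℝ))).sub (hid.mul_const (rowT c x))).mul_const (r x j)).add
        (hid.mul_const (c x j))
  have hharm : ∀ x ∈ NP, L x = ∑ j, r x j * L j := fun x hx =>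
    tendsto_nhds_unique (hL x) <|
      (tendsto_finsetSum _ fun j _ => (hP x j).mul (hL j)).congr' <|
        (hst.filter_mono hU).mono fun ε h => (hitProb_step h.2.1 h.2.2 hS (hNA x hx)).symm
  have hconst : ∀ x ∈ NP, L x = L g := fun x hx =>
    harmonic_const hr0 hr1 hcl hirr hharm hg hx
  have hbal : ∑ x ∈ Finset.univ.filter (· ∈ NP),
      π x * ∑ j, c x j * (L j - ∑ k, r x k * L k) = 0 := by
    refine tendsto_nhds_unique
      (tendsto_finsetSum _ fun x _ => (tendsto_finsetSum _ fun j _ =>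
        ((hL j).sub (tendsto_finsetSum _ fun k _ => (hL k).const_mul (r x k))).const_mul
          (c x j)).const_mul (π x))
      (tendsto_const_nhds.congr' ?_)
    exact (hst.filter_mono hU).mono fun ε h =>
      (balance hcl hπs h.1 fun x hx => hitProb_step h.2.1 h.2.2 hS (hNA x hx)).symm
  have hbal' : ∑ y ∈ Finset.univ.filter (· ∉ NP),
      (∑ x ∈ Finset.univ.filter (· ∈ NP), c x y * π x) * (H y - L g) = 0 := by
    rw [← hbal]
    simp only [Finset.sum_mul]
    rw [Finset.sum_comm]
    refine Finset.sum_congr rfl fun x hx => ?_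
    have hx : x ∈ NP := by simpa using hx
    rw [← hharm x hx, hconst x hx, Finset.mul_sum, Finset.sum_filter]
    refine Finset.sum_congr rfl fun y _ => ?_
    split_ifs with hy
    · rw [hconst y hy]
      ring
    · rw [hLH y hy]
      ring
  have hD : 0 < ∑ y ∈ Finset.univ.filter (· ∉ NP),
      ∑ x ∈ Finset.univ.filter (· ∈ NP), c x y * π x := by
    have hnn : ∀ x y, 0 ≤ c x y * π x := fun x y => mul_nonneg (hc0 x y) (hπ0 x)
    refine Finset.sum_pos' (fun y _ => Finset.sum_nonneg fun x _ => hnn x y)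
      ⟨y₀, by simpa using hy₀, Finset.sum_pos' (fun x _ => hnn x y₀)
        ⟨x₀, by simpa using hx₀, mul_pos hc₀ (stationary_pos hr0 hirr hπ0 hπ1 hπs hx₀)⟩⟩
  have hfin : ∑ y ∈ Finset.univ.filter (· ∉ NP), Wcoll c NP π y * H y = L g := by
    rw [Finset.sum_congr rfl fun y hy => by
      rw [Wcoll_eq hc0 NP π (by simpa using hy), div_mul_eq_mul_div], ← Finset.sum_div,
      div_eq_iff hD.ne']
    simp only [mul_sub, Finset.sum_sub_distrib, ← Finset.sum_mul] at hbal'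
    linarith
  rw [hfin]
  exact hL g

end
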